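/- (Rational extension of the Heisenberg algebra) There exist a division ring K and an injective ring homomorphism ι : H → K such that every element of K can be written as (ι b)⁻¹ · (ι a) for some a, b ∈ H with b ≠ 0. (Thus the Heisenberg algebra embeds into an algebra with division, its rational extension, in which every element is a fraction with numerator and denominator from H.) -/

import Mathlib

open Polynomial

/-- Multiplication by X on ℂ[X]. -/
noncomputable def M : Module.End ℂ (Polynomial ℂ) := LinearMap.mulLeft ℂ Polynomial.X

/-- Formal derivative on ℂ[X]. -/
noncomputable def D : Module.End ℂ (Polynomial ℂ) := Polynomial.derivative

/-- The Heisenberg algebra, as a ring in its own right. -/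
noncomputable def H : Subalgebra ℂ (Module.End ℂ (Polynomial ℂ)) :=
  Algebra.adjoin ℂ ({M, D} : Set (Module.End ℂ (Polynomial ℂ)))

theorem heis_ind {Pr : Module.End ℂ (Polynomial ℂ) → Prop} (one : Pr 1)
    (hadd : ∀ S T, Pr S → Pr T → Pr (S + T)) (hsmul : ∀ (c : ℂ) T, Pr T → Pr (c • T))
    (hM : ∀ T, Pr T → Pr (M * T)) (hD : ∀ T, Pr T → Pr (D * T)) :
    ∀ T ∈ H, Pr T := by
  have key : ∀ T ∈ H, ∀ S, Pr S → Pr (T * S) := by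
    intro T hT
    unfold H at hT
    induction hT using Algebra.adjoin_induction with
    | mem x hx =>
      rcases hx with rfl | rfl
      · exact hM
      · exact hD
    | algebraMap r =>
      intro S hS
      rw [← Algebra.smul_def]
      exact hsmul r S hS
    | add x y _ _ hx hy =>
      intro S hS
      rw [add_mul]
      exact hadd _ _ (hx S hS) (hy S hS)
    | mul x y _ _ hx hy =>
      intro S hS
      rw [mul_assoc]
      exact hx _ (hy S hS)
  intro T hT
  simpa using key T hT 1 one

theorem M_apply' (p : ℂ[X]) : M p = X * p := rfl
theorem D_apply' (p : ℂ[X]) : D p = derivative p := rfl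

/-- Action of an element of `H` on monomials, via a symbol polynomial. -/
def HasSymb (T : Module.End ℂ (Polynomial ℂ)) : Prop :=
  ∃ (N : ℕ) (P : Polynomial (Polynomial ℂ)), ∀ n : ℕ,
    X ^ N * T (X ^ n) = X ^ n * P.map (evalRingHom (n : ℂ))

theorem hasSymb_of_mem : ∀ T ∈ H, HasSymb T := by
  apply heis_ind
  · exact ⟨0, 1, fun n => by simp⟩
  · rintro S T ⟨N, P, hP⟩ ⟨N', P', hP'⟩
    refine ⟨N + N', X ^ N' * P + X ^ N * P', fun n => ?_⟩
    simp only [LinearMap.add_apply, Polynomial.map_add, Polynomial.map_mul, Polynomial.map_pow,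
      Polynomial.map_X]
    linear_combination X ^ N' * hP n + X ^ N * hP' n
  · rintro c T ⟨N, P, hP⟩
    refine ⟨N, C (C c) * P, fun n => ?_⟩
    simp only [LinearMap.smul_apply, Polynomial.map_mul, Polynomial.map_C, smul_eq_C_mul,
      coe_evalRingHom, eval_C]
    linear_combination C c * hP n
  · rintro T ⟨N, P, hP⟩
    refine ⟨N, X * P, fun n => ?_⟩
    simp only [Module.End.mul_apply, M_apply', Polynomial.map_mul, Polynomial.map_X]
    linear_combination X * hP n
  · rintro T ⟨N, P, hP⟩
    refine ⟨N + 1, C X * P + X * derivative P - (N : Polynomial (Polynomial ℂ)) * P, fun n => ?_⟩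
    have h := congrArg derivative (hP n)
    have hx : ∀ k : ℕ, X * derivative (X ^ k : ℂ[X]) = (k : ℂ[X]) * X ^ k := by
      intro k
      cases k with
      | zero => simp
      | succ k => simp [derivative_X_pow]; ring
    simp only [derivative_mul, derivative_map] at h
    simp only [Module.End.mul_apply, D_apply', Polynomial.map_mul, Polynomial.map_X,
      Polynomial.map_add, Polynomial.map_sub, Polynomial.map_C, Polynomial.map_natCast,
      coe_evalRingHom, eval_X, map_natCast] at *
    linear_combination X * h - T (X ^ n) * hx N + (P.map (evalRingHom (n : ℂ))) * hx n
      - (N : ℂ[X]) * hP n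

theorem large_degree (T : Module.End ℂ (Polynomial ℂ)) (hT : T ∈ H) (h0 : T ≠ 0) :
    ∃ n0 N J : ℕ, ∀ p : ℂ[X], p ≠ 0 → n0 ≤ p.natDegree →
      T p ≠ 0 ∧ (T p).natDegree + N = p.natDegree + J := by
  obtain ⟨N, P, hP⟩ := hasSymb_of_mem T hT
  have hP0 : P ≠ 0 := by
    rintro rfl
    apply h0
    apply Polynomial.lhom_ext'
    intro n
    ext1
    have := hP n
    simpa [X_pow_eq_monomial] using this
  set c := P.leadingCoeff with hc
  have hc0 : c ≠ 0 := by simpa [hc] using hP0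
  -- avoid the roots
  have hfin : {n : ℕ | c.eval (n : ℂ) = 0}.Finite := by
    have h1 : {z : ℂ | c.IsRoot z}.Finite := Polynomial.finite_setOfPred_isRoot hc0
    exact h1.preimage (f := fun n : ℕ => (n : ℂ)) (fun a _ b _ h => by simpa using h)
  obtain ⟨B, hB⟩ := hfin.bddAbove
  refine ⟨B + 1, N, P.natDegree, fun p hp hn => ?_⟩
  set n := p.natDegree with hnd
  set J := P.natDegree with hJ
  have hcn : c.eval (n : ℂ) ≠ 0 := fun h => by
    have := hB (show n ∈ {n : ℕ | c.eval (n : ℂ) = 0} from h)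
    omega
  have hsum : X ^ N * T p = ∑ k ∈ Finset.range (n + 1),
      C (p.coeff k) * (X ^ k * P.map (evalRingHom (k : ℂ))) := by
    conv_lhs => rw [p.as_sum_range_C_mul_X_pow]
    rw [map_sum, Finset.mul_sum]
    refine Finset.sum_congr rfl fun k _ => ?_
    rw [← smul_eq_C_mul, map_smul, smul_eq_C_mul, ← hP k]
    ring
  have hdk : ∀ k, (C (p.coeff k) * (X ^ k * P.map (evalRingHom (k : ℂ)))).natDegree ≤ k + J := by
    intro k
    refine (natDegree_C_mul_le _ _).trans (natDegree_mul_le.trans ?_)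
    have := natDegree_map_le (f := evalRingHom (k : ℂ)) (p := P)
    simp only [natDegree_X_pow]
    omega
  have hle : (X ^ N * T p).natDegree ≤ n + J := by
    rw [hsum]
    refine natDegree_sum_le_of_forall_le _ _ fun k hk => (hdk k).trans ?_
    have := Finset.mem_range.1 hk
    omega
  have hco : (X ^ N * T p).coeff (n + J) = p.leadingCoeff * c.eval (n : ℂ) := by
    rw [hsum, finsetSum_coeff, Finset.sum_range_succ, Finset.sum_eq_zero, zero_add]
    · rw [coeff_C_mul, add_comm n J, coeff_X_pow_mul, coeff_map]
      rfl
    · intro k hk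
      apply coeff_eq_zero_of_natDegree_lt
      have := Finset.mem_range.1 hk
      have := hdk k
      omega
  have hne : (X ^ N * T p).coeff (n + J) ≠ 0 := by
    rw [hco]
    exact mul_ne_zero (by simpa using hp) hcn
  have hdeg : (X ^ N * T p).natDegree = n + J := le_antisymm hle (le_natDegree_of_ne_zero hne)
  have hT0 : T p ≠ 0 := by
    intro h
    simp [h] at hne
  refine ⟨hT0, ?_⟩
  rw [natDegree_X_pow_mul _ hT0] at hdeg
  exact hdeg

theorem heis_mul_ne_zero (S T : Module.End ℂ (Polynomial ℂ)) (hS : S ∈ H) (hT : T ∈ H)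
    (hS0 : S ≠ 0) (hT0 : T ≠ 0) : S * T ≠ 0 := by
  obtain ⟨n, N, J, h⟩ := large_degree S hS hS0
  obtain ⟨n', N', J', h'⟩ := large_degree T hT hT0
  intro h0
  obtain ⟨h1, h2⟩ := h' (X ^ (n + n' + N')) (by simp) (by simp; omega)
  simp only [natDegree_X_pow] at h2
  obtain ⟨h3, -⟩ := h (T (X ^ (n + n' + N'))) h1 (by omega)
  apply h3
  rw [← Module.End.mul_apply, h0]
  rfl

instance heisNoZeroDiv : NoZeroDivisors H where
  eq_zero_or_eq_zero_of_mul_eq_zero := by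
    rintro ⟨a, ha⟩ ⟨b, hb⟩ hab
    by_contra! hcon
    refine heis_mul_ne_zero a b ha hb (fun h => hcon.1 (Subtype.ext h))
      (fun h => hcon.2 (Subtype.ext h)) (congrArg Subtype.val hab)

/-- The Bernstein filtration. -/
noncomputable def Fil (n : ℕ) : Submodule ℂ (Module.End ℂ (Polynomial ℂ)) :=
  Submodule.span ℂ {T | ∃ i j : ℕ, i + j ≤ n ∧ M ^ i * D ^ j = T}

theorem Fil_mono {m n : ℕ} (h : m ≤ n) : Fil m ≤ Fil n := by
  apply Submodule.span_mono
  rintro T ⟨i, j, hij, rfl⟩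
  exact ⟨i, j, hij.trans h, rfl⟩

theorem mem_Fil {i j n : ℕ} (h : i + j ≤ n) : M ^ i * D ^ j ∈ Fil n :=
  Submodule.subset_span ⟨i, j, h, rfl⟩

theorem Fil_sub_finset (n : ℕ) : ∃ s : Finset (Module.End ℂ (Polynomial ℂ)),
    s.card ≤ (n + 1) * (n + 1) ∧ Fil n ≤ Submodule.span ℂ (s : Set _) := by
  classical
  refine ⟨(Finset.range (n + 1) ×ˢ Finset.range (n + 1)).image (fun ij => M ^ ij.1 * D ^ ij.2),
    Finset.card_image_le.trans (by simp), ?_⟩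
  apply Submodule.span_mono
  rintro T ⟨i, j, hij, rfl⟩
  simp only [Finset.coe_image, Set.mem_image, Finset.mem_coe, Finset.mem_product, Finset.mem_range]
  exact ⟨(i, j), ⟨by simp; omega, by simp; omega⟩, rfl⟩

instance Fil_fin (n : ℕ) : FiniteDimensional ℂ (Fil n) := by
  obtain ⟨s, -, hs⟩ := Fil_sub_finset n
  have := FiniteDimensional.span_finset ℂ s
  exact Submodule.finiteDimensional_of_le hs

theorem Fil_finrank (n : ℕ) : Module.finrank ℂ (Fil n) ≤ (n + 1) * (n + 1) := by
  obtain ⟨s, hc, hs⟩ := Fil_sub_finset n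
  have := FiniteDimensional.span_finset ℂ s
  exact (Submodule.finrank_mono hs).trans ((finrank_span_finset_le_card s).trans hc)

theorem M_mem : M ∈ H := Algebra.subset_adjoin (by simp)
theorem D_mem : D ∈ H := Algebra.subset_adjoin (by simp)

theorem Fil_le_H {n : ℕ} {T : Module.End ℂ (Polynomial ℂ)} (h : T ∈ Fil n) : T ∈ H := by
  have : Fil n ≤ Subalgebra.toSubmodule H := by
    apply Submodule.span_le.2
    rintro T ⟨i, j, hij, rfl⟩
    exact H.mul_mem (H.pow_mem M_mem i) (H.pow_mem D_mem j)
  exact this h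

theorem D_mul_M_pow (i : ℕ) : D * M ^ i = M ^ i * D + (i : ℂ) • M ^ (i - 1) := by
  have hMp : ∀ (k : ℕ) (p : ℂ[X]), (M ^ k) p = X ^ k * p := by
    intro k
    induction k with
    | zero => simp
    | succ k ih =>
      intro p
      rw [pow_succ, Module.End.mul_apply, ih, M_apply']
      ring
  refine LinearMap.ext fun p => ?_
  simp only [Module.End.mul_apply, LinearMap.add_apply, LinearMap.smul_apply, hMp, D_apply',
    derivative_mul, derivative_X_pow, smul_eq_C_mul]
  ring

theorem M_mul_Fil {n : ℕ} {T : Module.End ℂ (Polynomial ℂ)} (h : T ∈ Fil n) :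
    M * T ∈ Fil (n + 1) := by
  have : Fil n ≤ (Fil (n + 1)).comap (LinearMap.mulLeft ℂ M) := by
    apply Submodule.span_le.2
    rintro T ⟨i, j, hij, rfl⟩
    change M * (M ^ i * D ^ j) ∈ Fil (n + 1)
    rw [← mul_assoc, ← pow_succ']
    exact mem_Fil (by omega)
  exact this h

theorem D_mul_Fil {n : ℕ} {T : Module.End ℂ (Polynomial ℂ)} (h : T ∈ Fil n) :
    D * T ∈ Fil (n + 1) := by
  have : Fil n ≤ (Fil (n + 1)).comap (LinearMap.mulLeft ℂ D) := by
    apply Submodule.span_le.2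
    rintro T ⟨i, j, hij, rfl⟩
    change D * (M ^ i * D ^ j) ∈ Fil (n + 1)
    rw [← mul_assoc, D_mul_M_pow, add_mul, mul_assoc, ← pow_succ', smul_mul_assoc]
    exact add_mem (mem_Fil (by omega)) (Submodule.smul_mem _ _ (mem_Fil (by omega)))
  exact this h

theorem Fil_mul_Fil {n d : ℕ} {S T : Module.End ℂ (Polynomial ℂ)} (hS : S ∈ Fil n)
    (hT : T ∈ Fil d) : S * T ∈ Fil (n + d) := by
  have hDp : ∀ j, D ^ j * T ∈ Fil (j + d) := by
    intro j
    induction j with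
    | zero => simpa using hT
    | succ j ih =>
      rw [pow_succ', mul_assoc]
      exact Fil_mono (by omega) (D_mul_Fil ih)
  have hMp : ∀ i j, M ^ i * (D ^ j * T) ∈ Fil (i + j + d) := by
    intro i j
    induction i with
    | zero => simpa using hDp j
    | succ i ih =>
      rw [pow_succ', mul_assoc]
      exact Fil_mono (by omega) (M_mul_Fil ih)
  have : Fil n ≤ (Fil (n + d)).comap (LinearMap.mulRight ℂ T) := by
    apply Submodule.span_le.2
    rintro S ⟨i, j, hij, rfl⟩
    change M ^ i * D ^ j * T ∈ Fil (n + d)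
    rw [mul_assoc]
    exact Fil_mono (by omega) (hMp i j)
  exact this hS

theorem exists_Fil : ∀ T ∈ H, ∃ n, T ∈ Fil n := by
  apply heis_ind
  · exact ⟨0, by simpa using mem_Fil (i := 0) (j := 0) (n := 0) le_rfl⟩
  · rintro S T ⟨n, hn⟩ ⟨m, hm⟩
    exact ⟨n + m, add_mem (Fil_mono (by omega) hn) (Fil_mono (by omega) hm)⟩
  · rintro c T ⟨n, hn⟩
    exact ⟨n, Submodule.smul_mem _ _ hn⟩
  · rintro T ⟨n, hn⟩
    exact ⟨n + 1, M_mul_Fil hn⟩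
  · rintro T ⟨n, hn⟩
    exact ⟨n + 1, D_mul_Fil hn⟩

theorem growth (d : ℕ) : ∃ k : ℕ, (k * d + 1) * (k * d + 1) < 2 ^ k := by
  have h := tendsto_pow_const_div_const_pow_of_one_lt 2 (r := (2 : ℝ)) (by norm_num)
  have hpos : (0 : ℝ) < 1 / ((d : ℝ) + 1) ^ 2 := by positivity
  obtain ⟨k, hk, hk1⟩ := ((h.eventually (gt_mem_nhds hpos)).and
    (Filter.eventually_ge_atTop 1)).exists
  refine ⟨k, ?_⟩
  rw [div_lt_div_iff₀ (by positivity) (by positivity)] at hk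
  have h1 : (k * (d + 1)) ^ 2 < 2 ^ k := by
    have : ((k : ℝ) * (d + 1)) ^ 2 < 2 ^ k := by rw [mul_pow]; linarith
    exact_mod_cast this
  have h2 : k * d + 1 ≤ k * (d + 1) := by rw [mul_add]; omega
  calc _ ≤ (k * (d + 1)) * (k * (d + 1)) := Nat.mul_le_mul h2 h2
    _ = (k * (d + 1)) ^ 2 := (sq _).symm
    _ < _ := h1

theorem exists_dependence (a b : Module.End ℂ (Polynomial ℂ)) (ha : a ∈ H) (hb : b ∈ H) :
    ∃ u ∈ H, ∃ v ∈ H, (u ≠ 0 ∨ v ≠ 0) ∧ u * a = v * b := by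
  by_contra! hcon
  obtain ⟨d1, h1⟩ := exists_Fil a ha
  obtain ⟨d2, h2⟩ := exists_Fil b hb
  obtain ⟨d, had, hbd⟩ : ∃ d, a ∈ Fil d ∧ b ∈ Fil d :=
    ⟨d1 + d2, Fil_mono (by omega) h1, Fil_mono (by omega) h2⟩
  have step : ∀ n, 2 * Module.finrank ℂ (Fil n) ≤ Module.finrank ℂ (Fil (n + d)) := by
    intro n
    let φ : (Fil n × Fil n) →ₗ[ℂ] Fil (n + d) := LinearMap.codRestrict (Fil (n + d))
      (LinearMap.coprod ((LinearMap.mulRight ℂ a).comp (Fil n).subtype)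
        (-((LinearMap.mulRight ℂ b).comp (Fil n).subtype)))
      (fun x => by
        change (x.1 : Module.End ℂ ℂ[X]) * a + -((x.2 : Module.End ℂ ℂ[X]) * b) ∈ _
        exact add_mem (Fil_mul_Fil x.1.2 had) (neg_mem (Fil_mul_Fil x.2.2 hbd)))
    have hinj : Function.Injective φ := by
      rw [injective_iff_map_eq_zero]
      rintro ⟨⟨u, hu⟩, ⟨v, hv⟩⟩ h
      have h' : u * a + -(v * b) = 0 := congrArg Subtype.val h
      have h'' : u * a = v * b := by rwa [← sub_eq_add_neg, sub_eq_zero] at h'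
      by_contra hne
      refine hcon u (Fil_le_H hu) v (Fil_le_H hv) ?_ h''
      by_contra! hz
      apply hne
      obtain ⟨rfl, rfl⟩ := hz
      rfl
    have := LinearMap.finrank_le_finrank_of_injective hinj
    have hfree : Module.Free ℂ (Fil n) := Module.Free.of_divisionRing ℂ (Fil n)
    rw [Module.finrank_prod] at this
    omega
  have hexp : ∀ k, 2 ^ k ≤ Module.finrank ℂ (Fil (k * d)) := by
    intro k
    induction k with
    | zero =>
      have h1 : (1 : Module.End ℂ ℂ[X]) ∈ Fil (0 * d) := by
        simpa using mem_Fil (i := 0) (j := 0) (n := 0 * d) (by simp)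
      rw [pow_zero, Nat.one_le_iff_ne_zero, Ne, Submodule.finrank_eq_zero]
      intro h
      rw [h, Submodule.mem_bot] at h1
      exact one_ne_zero h1
    | succ k ih =>
      have := step (k * d)
      rw [add_mul, one_mul, pow_succ]
      omega
  obtain ⟨k, hk⟩ := growth d
  exact absurd ((hexp k).trans (Fil_finrank _)) (not_le.2 hk)

theorem heis_ore (r s : H) (hs : s ≠ 0) : ∃ u v : H, u ≠ 0 ∧ u * r = v * s := by
  obtain ⟨u, hu, v, hv, hne, h⟩ := exists_dependence r s r.2 s.2
  have h' : (⟨u, hu⟩ : H) * r = ⟨v, hv⟩ * s := Subtype.ext h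
  refine ⟨⟨u, hu⟩, ⟨v, hv⟩, ?_, h'⟩
  intro h0
  rw [h0, zero_mul] at h'
  have hv0 : (⟨v, hv⟩ : H) = 0 := (mul_eq_zero.1 h'.symm).resolve_right hs
  rcases hne with hne | hne
  · exact hne (congrArg Subtype.val h0)
  · exact hne (congrArg Subtype.val hv0)

theorem ore_extension (R : Type) [Ring R] [Nontrivial R] [NoZeroDivisors R]
    (hore : ∀ r s : R, s ≠ 0 → ∃ u v : R, u ≠ 0 ∧ u * r = v * s) :
    ∃ (K : Type) (_ : DivisionRing K) (ι : R →+* K),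
      Function.Injective ι ∧
      ∀ k : K, ∃ a b : R, b ≠ 0 ∧ k = (ι b)⁻¹ * (ι a) := by
  letI hOre : OreLocalization.OreSet (nonZeroDivisors R) :=
    OreLocalization.oreSetOfNoZeroDivisors
      (fun r s => (hore r s (nonZeroDivisors.ne_zero s.2)).choose_spec.choose)
      (fun r s => ⟨(hore r s (nonZeroDivisors.ne_zero s.2)).choose,
        mem_nonZeroDivisors_of_ne_zero
          (hore r s (nonZeroDivisors.ne_zero s.2)).choose_spec.choose_spec.1⟩)
      (fun r s => (hore r s (nonZeroDivisors.ne_zero s.2)).choose_spec.choose_spec.2)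
  have hinj := OreLocalization.numeratorHom_inj (R := R) (S := nonZeroDivisors R) inf_le_left
  refine ⟨OreLocalization (nonZeroDivisors R) R, inferInstance,
    OreLocalization.numeratorRingHom, hinj, ?_⟩
  intro k
  induction k using OreLocalization.ind with
  | _ r s =>
    refine ⟨r, s, nonZeroDivisors.ne_zero s.2, ?_⟩
    have hne : (OreLocalization.numeratorRingHom (S := nonZeroDivisors R) (s : R)) ≠ 0 :=
      fun h => nonZeroDivisors.ne_zero s.2 (hinj (h.trans
        (map_zero (OreLocalization.numeratorRingHom (S := nonZeroDivisors R))).symm))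
    rw [eq_inv_mul_iff_mul_eq₀ hne]
    exact OreLocalization.mul_cancel

/-- The Heisenberg algebra embeds into a division ring in which every element
is a left fraction of elements of the Heisenberg algebra. -/
theorem heisenberg_rational_extension :
    ∃ (K : Type) (_ : DivisionRing K) (ι : H →+* K),
      Function.Injective ι ∧
      ∀ k : K, ∃ a b : H, b ≠ 0 ∧ k = (ι b)⁻¹ * (ι a) := by
  exact ore_extension H heis_ore
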